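/- arXiv:2301.03739 — 2 statements merged into one kernel-verified Lean document; each statement's English description precedes it below -/
import Mathlib

section
/- Let R be an acyclic self-relation on a finite set X with Dom R = X, and let j ≥ 1 satisfy R^j = R^{j+1}. Then the number of connected components of the directed graph G_R equals the number of connected components of the Dowker complex K_{R^j}: the equivalence relation on X generated by R coincides with the reflexive-transitive closure of the edge relation E of K_{R^j}, where E a b ↔ ∃ y, R^j a y ∧ R^j b y. That is, for all x, x' ∈ X, EqvGen R x x' holds if and only if ReflTransGen E x x' holds. -/
/-- The Dowker complex `K_R` of a relation `R : X → Y → Prop`: the set of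
nonempty finite subsets `σ ⊆ X` such that there is a `y` with `R x y` for all `x ∈ σ`. -/
def dowkerK {X Y : Type*} (R : X → Y → Prop) : Set (Finset X) :=
  {σ | σ.Nonempty ∧ ∃ y, ∀ x ∈ σ, R x y}

/-- The Dowker complex `L_R` of a relation `R : X → Y → Prop`: the set of
nonempty finite subsets `τ ⊆ Y` such that there is an `x` with `R x y` for all `y ∈ τ`. -/
def dowkerL {X Y : Type*} (R : X → Y → Prop) : Set (Finset Y) :=
  {τ | τ.Nonempty ∧ ∃ x, ∀ y ∈ τ, R x y}

/-- Composition of relations: `relComp R₁ R₂` is the paper's `R₂ ∘ R₁`,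
i.e. `(R₂ ∘ R₁) x z ↔ ∃ y, R₁ x y ∧ R₂ y z`. -/
def relComp {X Y Z : Type*} (R₁ : X → Y → Prop) (R₂ : Y → Z → Prop) : X → Z → Prop :=
  fun x z => ∃ y, R₁ x y ∧ R₂ y z

/-- Powers of a self-relation: `R^0` is equality and `R^(n+1) = R ∘ R^n`. -/
def relPow {X : Type*} (R : X → X → Prop) : ℕ → X → X → Prop
  | 0 => Eq
  | n + 1 => relComp (relPow R n) R

theorem relPow_succ_left {X : Type*} (R : X → X → Prop) (n : ℕ) :
    ∀ x y z : X, R x y → relPow R n y z → relPow R (n + 1) x z := by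
  induction n with
  | zero =>
    intro x y z h1 h2
    have h2' : y = z := h2
    subst h2'
    exact ⟨x, rfl, h1⟩
  | succ k ih =>
    rintro x y z h1 ⟨w, hw, hwz⟩
    exact ⟨w, ih x y w h1 hw, hwz⟩

theorem relPow_total {X : Type*} (R : X → X → Prop) (hDom : ∀ x, ∃ y, R x y) (n : ℕ) (x : X) :
    ∃ y, relPow R n x y := by
  induction n with
  | zero => exact ⟨x, rfl⟩
  | succ k ih =>
    obtain ⟨y, hy⟩ := ih
    obtain ⟨z, hz⟩ := hDom y
    exact ⟨z, y, hy, hz⟩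

theorem relPow_eqvGen {X : Type*} (R : X → X → Prop) (n : ℕ) :
    ∀ x y : X, relPow R n x y → Relation.EqvGen R x y := by
  induction n with
  | zero =>
    intro x y h
    have h' : x = y := h
    subst h'
    exact Relation.EqvGen.refl x
  | succ k ih =>
    rintro x y ⟨w, hw, hwy⟩
    exact Relation.EqvGen.trans _ _ _ (ih x w hw) (Relation.EqvGen.rel _ _ hwy)

theorem stmt12 {X : Type*} [Fintype X] (R : X → X → Prop)
    (hDom : ∀ x, ∃ y, R x y)
    (hacyclic : ∀ x y, ∀ m n : ℕ, 1 ≤ m → 1 ≤ n →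
      relPow R m x y → relPow R n y x → x = y)
    (j : ℕ) (hj : 1 ≤ j) (hstab : relPow R j = relPow R (j + 1)) :
    ∀ x x' : X, Relation.EqvGen R x x' ↔
      Relation.ReflTransGen (fun a b => ∃ y, relPow R j a y ∧ relPow R j b y) x x' := by
  intro x x'
  constructor
  · intro h
    induction h with
    | rel a b hab =>
      obtain ⟨z, hz⟩ := relPow_total R hDom j b
      refine Relation.ReflTransGen.single ⟨z, ?_, hz⟩
      rw [hstab]
      exact relPow_succ_left R j a b z hab hz
    | refl a => exact Relation.ReflTransGen.refl
    | symm a b _ ih =>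
      clear * - ih
      induction ih with
      | refl => exact Relation.ReflTransGen.refl
      | tail _ hbc ih =>
        obtain ⟨y, h1, h2⟩ := hbc
        exact Relation.ReflTransGen.head ⟨y, h2, h1⟩ ih
    | trans a b c _ _ ih1 ih2 => exact ih1.trans ih2
  · intro h
    induction h with
    | refl => exact Relation.EqvGen.refl x
    | tail _ hbc ih =>
      obtain ⟨y, h1, h2⟩ := hbc
      exact ih.trans _ _ _ ((relPow_eqvGen R j _ _ h1).trans _ _ _
        ((relPow_eqvGen R j _ _ h2).symm _ _))
end

section
/- Let R be a strongly connected self-relation on a finite nonempty set X having a fixed point (there exists x₀ with R x₀ x₀), and let j, p ≥ 1 satisfy R^j = R^{j+p}. Then R^j is the full relation: R^j x y holds for all x, y ∈ X. Consequently K_{R^j} and L_{R^j} consist of all nonempty finite subsets of X (they are full simplices, hence contractible). -/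
theorem relPow_trans {X : Type*} (R : X → X → Prop) (m n : ℕ) (x y z : X)
    (h₁ : relPow R m x y) (h₂ : relPow R n y z) : relPow R (m + n) x z := by
  induction n generalizing z with
  | zero =>
    have h : y = z := h₂
    subst h
    exact h₁
  | succ n ih =>
    obtain ⟨w, hw, hR⟩ := h₂
    exact ⟨w, ih w hw, hR⟩

theorem relPow_fix {X : Type*} (R : X → X → Prop) (x : X) (h : R x x) (n : ℕ) :
    relPow R n x x := by
  induction n with
  | zero => exact rfl
  | succ n ih => exact ⟨x, ih, h⟩

theorem relPow_shift {X : Type*} (R : X → X → Prop) (j p : ℕ)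
    (h : relPow R j = relPow R (j + p)) (n : ℕ) :
    relPow R (j + n) = relPow R (j + p + n) := by
  induction n with
  | zero => exact h
  | succ n ih =>
    change relComp (relPow R (j + n)) R = relComp (relPow R (j + p + n)) R
    rw [ih]

theorem relPow_periodic {X : Type*} (R : X → X → Prop) (j p : ℕ)
    (h : relPow R j = relPow R (j + p)) (k : ℕ) :
    relPow R j = relPow R (j + k * p) := by
  induction k with
  | zero => simp
  | succ k ih =>
    have e : j + (k + 1) * p = j + p + k * p := by ring
    rw [e, ← relPow_shift R j p h (k * p)]
    exact ih

theorem stmt16 {X : Type*} [Fintype X] [Nonempty X] (R : X → X → Prop)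
    (hsc : ∀ x y : X, ∃ n : ℕ, 1 ≤ n ∧ relPow R n x y)
    (hfix : ∃ x₀, R x₀ x₀)
    (j p : ℕ) (hj : 1 ≤ j) (hp : 1 ≤ p)
    (hper : relPow R j = relPow R (j + p)) :
    (∀ x y : X, relPow R j x y) ∧
    dowkerK (relPow R j) = {σ : Finset X | σ.Nonempty} ∧
    dowkerL (relPow R j) = {τ : Finset X | τ.Nonempty} := by
  have full : ∀ x y : X, relPow R j x y := by
    intro x y
    obtain ⟨x₀, h₀⟩ := hfix
    obtain ⟨a, -, ha⟩ := hsc x x₀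
    obtain ⟨b, -, hb⟩ := hsc x₀ y
    rw [relPow_periodic R j p hper (a + b)]
    have hle : a + b ≤ j + (a + b) * p := by nlinarith
    obtain ⟨m, hm⟩ := Nat.exists_eq_add_of_le hle
    have e : j + (a + b) * p = a + m + b := by omega
    rw [e]
    exact relPow_trans R _ _ _ _ _
      (relPow_trans R _ _ _ _ _ ha (relPow_fix R x₀ h₀ m)) hb
  obtain ⟨c⟩ := ‹Nonempty X›
  refine ⟨full, ?_, ?_⟩
  · ext σ
    exact ⟨fun h => h.1, fun h => ⟨h, c, fun x _ => full x c⟩⟩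
  · ext σ
    exact ⟨fun h => h.1, fun h => ⟨h, c, fun y _ => full c y⟩⟩
end
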